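/- arXiv:math/0305087 — 5 statements merged into one kernel-verified Lean document; each statement's English description precedes it below -/
import Mathlib

section
/- There exists a set A of integers such that r_{A,2}(n) = 1 for every integer n (a unique representation basis for ℤ), and such that the number of elements a ∈ A with |a| ≤ x is at least (x/8)^{1/3} for all real x ≥ 64. -/
/-- The representation function of order 2: the number (in `ℕ∞`) of ways to
write `n = a₁ + a₂` with `a₁, a₂ ∈ A` and `a₁ ≤ a₂`. -/
noncomputable def rep2 (A : Set ℤ) (n : ℤ) : ℕ∞ :=
  {p : ℤ × ℤ | p.1 ∈ A ∧ p.2 ∈ A ∧ p.1 ≤ p.2 ∧ p.1 + p.2 = n}.encard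

/-!
The set is the union of an increasing chain of finite Sidon sets starting from `{0}`, each step of
which makes the next integer `n` of a fixed enumeration of `ℤ` a sum of two elements. If `A` is a
Sidon set with `k` elements, `|n| ≤ k ^ 2` and `n` is not yet such a sum, adjoin `b` and `n - b`.
The result is again Sidon unless `b` solves one of seven families of linear equations with
parameters in `A`, which excludes at most `7 k ^ 3` values, so some `b` with `|b| ≤ 7 k ^ 3` works
and the new elements have absolute value at most `8 k ^ 3`. If `n` is already a sum, do the same for
some other `m ∈ [0, k ^ 2]` that is not, so that the chain always gains two elements per step.
Every integer becomes a sum of two elements, in only one way by the Sidon property, and the bound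
on the elements of a stage in terms of the size of the previous one gives the counting bound.
-/

open scoped Pointwise Finset

/-- Sidon sets: sums `a + b` of two elements are distinct up to swapping `a` and `b`, with `a = b`
allowed. -/
def IsSidon {M : Type*} [Add M] (A : Set M) : Prop :=
  ∀ ⦃a⦄, a ∈ A → ∀ ⦃b⦄, b ∈ A → ∀ ⦃c⦄, c ∈ A → ∀ ⦃d⦄, d ∈ A →
    a + b = c + d → (a = c ∧ b = d) ∨ (a = d ∧ b = c)

theorem isSidon_singleton {M : Type*} [Add M] (a : M) : IsSidon {a} := by
  rintro _ rfl _ rfl _ rfl _ rfl -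
  exact .inl ⟨rfl, rfl⟩

theorem isSidon_iUnion_of_directed {M ι : Type*} [Add M] {A : ι → Set M}
    (hdir : Directed (· ⊆ ·) A) (hA : ∀ i, IsSidon (A i)) : IsSidon (⋃ i, A i) := by
  classical
  intro a ha b hb c hc d hd
  have : Nonempty ι := (Set.mem_iUnion.mp ha).nonempty
  obtain ⟨i, hi⟩ := hdir.exists_mem_subset_of_finset_subset_biUnion (s := {a, b, c, d}) (by
    simp [Set.insert_subset_iff, ha, hb, hc, hd])
  simp only [Finset.coe_insert, Finset.coe_singleton, Set.insert_subset_iff,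
    Set.singleton_subset_iff] at hi
  exact hA i hi.1 hi.2.1 hi.2.2.1 hi.2.2.2

protected theorem IsSidon.insert {M : Type*} [AddCancelCommMonoid M] {A : Set M} {b : M}
    (hA : IsSidon A) (h₁ : ∀ x ∈ A, ∀ y ∈ A, ∀ z ∈ A, b + z ≠ x + y)
    (h₂ : ∀ x ∈ A, ∀ y ∈ A, b + b ≠ x + y) : IsSidon (insert b A) := by
  unfold IsSidon at *
  rintro p (rfl | hp) q (rfl | hq) r (rfl | hr) s (rfl | hs) h <;> grind

theorem rep2_eq_one_of_isSidon {A : Set ℤ} {n : ℤ} (hA : IsSidon A) (hn : n ∈ A + A) :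
    rep2 A n = 1 := by
  obtain ⟨x, hx, y, hy, rfl⟩ := Set.mem_add.mp hn
  wlog hxy : x ≤ y generalizing x y
  · rw [add_comm]
    exact this y hy x hx (Set.add_mem_add hy hx) (le_of_not_ge hxy)
  refine Set.encard_eq_one.mpr ⟨(x, y), Set.eq_singleton_iff_unique_mem.mpr
    ⟨⟨hx, hy, hxy, rfl⟩, ?_⟩⟩
  rintro ⟨p, q⟩ ⟨hp, hq, hpq, hsum⟩
  rcases hA hp hq hx hy hsum with ⟨rfl, rfl⟩ | ⟨rfl, rfl⟩
  · rfl
  · exact Prod.ext (hpq.antisymm hxy) (hxy.antisymm hpq)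

theorem finite_mem_abs_le (A : Set ℤ) (x : ℝ) : {a : ℤ | a ∈ A ∧ |(a : ℝ)| ≤ x}.Finite :=
  (Set.finite_Icc (-⌊x⌋) ⌊x⌋).subset fun _ ha ↦
    abs_le.mp (Int.le_floor.mpr (mod_cast ha.2))

theorem monotone_ncard_abs_le (A : Set ℤ) :
    Monotone fun x : ℝ ↦ {a : ℤ | a ∈ A ∧ |(a : ℝ)| ≤ x}.ncard := fun _ y hxy ↦
  Set.ncard_le_ncard (fun _ ha ↦ ⟨ha.1, ha.2.trans hxy⟩) (finite_mem_abs_le A y)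

theorem rpow_inv_le_ncard_abs_le {A : Set ℤ} {c : ℝ} {d : ℕ} (hc : 0 < c) (hd : d ≠ 0)
    (hA : ∀ m : ℕ, m < {a : ℤ | a ∈ A ∧ |(a : ℝ)| ≤ c * m ^ d}.ncard) {x : ℝ} (hx : 0 ≤ x) :
    (x / c) ^ (d : ℝ)⁻¹ ≤ ({a : ℤ | a ∈ A ∧ |(a : ℝ)| ≤ x}.ncard : ℝ) := by
  set t := (x / c) ^ (d : ℝ)⁻¹
  have ht : 0 ≤ t := by positivity
  have htx : c * ⌊t⌋₊ ^ d ≤ x :=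
    calc
      c * ⌊t⌋₊ ^ d ≤ c * t ^ d := by gcongr; exact Nat.floor_le ht
      _ = x := by rw [Real.rpow_inv_natCast_pow (by positivity) hd, mul_div_cancel₀ _ hc.ne']
  calc
    t ≤ (⌊t⌋₊ + 1 : ℕ) := mod_cast (Nat.lt_floor_add_one t).le
    _ ≤ _ := Nat.cast_le.mpr ((hA ⌊t⌋₊).trans_le (monotone_ncard_abs_le A htx))

/-- A finite set containing every `b` for which adjoining `b` and `n - b` to a Sidon set `A` makes
two sums coincide, apart from coincidences of `b + (n - b)` with a sum of two elements of `A`.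
The divisions are rounded, which may add superfluous values but loses no exact solution. -/
def forbidden (A : Finset ℤ) (n : ℤ) : Finset ℤ :=
  (A ×ˢ A ×ˢ A).biUnion fun (x, y, z) ↦
    {x + y - z, n - (x + y - z), (x + y) / 2, n - (x + y) / 2, (n + x - y) / 2,
      (n + x) / 3, (2 * n - x) / 3}

theorem card_forbidden_le (A : Finset ℤ) (n : ℤ) : #(forbidden A n) ≤ 7 * #A ^ 3 :=
  calc
    #(forbidden A n) ≤ #(A ×ˢ A ×ˢ A) * 7 :=
      Finset.card_biUnion_le_card_mul _ _ _ fun _ _ ↦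
        (Finset.card_insert_le _ _).trans (Nat.succ_le_succ Finset.card_le_six)
    _ = 7 * #A ^ 3 := by simp only [Finset.card_product]; ring

section

variable {A : Finset ℤ} {n b : ℤ}

theorem ne_of_notMem_forbidden (hb : b ∉ forbidden A n) {x y z : ℤ} (hx : x ∈ A) (hy : y ∈ A)
    (hz : z ∈ A) :
    b + z ≠ x + y ∧ (n - b) + z ≠ x + y ∧ b + b ≠ x + y ∧ (n - b) + (n - b) ≠ x + y ∧
      b + y ≠ (n - b) + x ∧ b + b ≠ (n - b) + x ∧ (n - b) + (n - b) ≠ b + x := by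
  have hxyz : (x, y, z) ∈ A ×ˢ A ×ˢ A := by simp [hx, hy, hz]
  have not_solution := fun h ↦ hb (Finset.mem_biUnion.mpr ⟨_, hxyz, h⟩)
  simp only [Finset.mem_insert, Finset.mem_singleton, imp_false, not_or] at not_solution
  omega

theorem ne_sub_of_notMem_forbidden (hb : b ∉ forbidden A n) (hne : A.Nonempty) :
    b ≠ n - b := by
  obtain ⟨a, ha⟩ := hne
  have := ne_of_notMem_forbidden hb ha ha ha
  omega

theorem sub_notMem_of_notMem_forbidden (hb : b ∉ forbidden A n) : n - b ∉ A := by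
  intro h
  have := ne_of_notMem_forbidden hb h h h
  omega

theorem notMem_of_notMem_forbidden (hb : b ∉ forbidden A n) : b ∉ A := by
  intro h
  have := ne_of_notMem_forbidden hb h h h
  omega

theorem IsSidon.insert_sub_insert (hA : IsSidon (A : Set ℤ)) (hne : A.Nonempty) (hn : n ∉ A + A)
    (hb : b ∉ forbidden A n) : IsSidon (insert (n - b) (insert b (A : Set ℤ))) := by
  have hbn := ne_sub_of_notMem_forbidden hb hne
  have hsum : ∀ x ∈ A, ∀ y ∈ A, x + y ≠ n := fun x hx y hy h ↦
    hn (Finset.mem_add.mpr ⟨x, hx, y, hy, h⟩)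
  have avoid := @ne_of_notMem_forbidden _ _ _ hb
  refine (hA.insert ?_ ?_).insert ?_ ?_ <;> grind

end

theorem exists_notMem_forbidden_abs_le {A : Finset ℤ} {n : ℤ} (hn : |n| ≤ (#A : ℤ) ^ 2) :
    ∃ b ∉ forbidden A n, |b| ≤ 8 * (#A : ℤ) ^ 3 ∧ |n - b| ≤ 8 * (#A : ℤ) ^ 3 := by
  have hpow : (#A : ℤ) ^ 2 ≤ (#A : ℤ) ^ 3 := by
    rcases A.eq_empty_or_nonempty with rfl | hne
    · simp
    · exact_mod_cast Nat.pow_le_pow_right hne.card_pos (by norm_num)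
  obtain ⟨b, hb, hbF⟩ :
      ∃ b ∈ Finset.Icc (-(7 * (#A : ℤ) ^ 3)) (7 * (#A : ℤ) ^ 3), b ∉ forbidden A n := by
    apply Finset.exists_mem_notMem_of_card_lt_card
    rw [Int.card_Icc]
    have : (#(forbidden A n) : ℤ) ≤ 7 * (#A : ℤ) ^ 3 := mod_cast card_forbidden_le A n
    omega
  rw [Finset.mem_Icc] at hb
  exact ⟨b, hbF, by grind, by grind⟩

theorem exists_notMem_add_self_abs_le (A : Finset ℤ) : ∃ n ∉ A + A, |n| ≤ (#A : ℤ) ^ 2 := by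
  obtain ⟨n, hn, hnA⟩ : ∃ n ∈ Finset.Icc 0 ((#A : ℤ) ^ 2), n ∉ A + A := by
    apply Finset.exists_mem_notMem_of_card_lt_card
    have : (#(A + A) : ℤ) ≤ (#A : ℤ) ^ 2 := mod_cast sq #A ▸ Finset.card_add_le
    rw [Int.card_Icc]
    omega
  rw [Finset.mem_Icc] at hn
  exact ⟨n, hnA, by rw [abs_of_nonneg hn.1]; exact hn.2⟩

/-- The relation between consecutive sets of the chain: `B` is a Sidon set obtained from `A` by
adjoining two elements whose size is controlled by the number of elements of `A`. -/
structure IsSidonExtension (A B : Finset ℤ) : Prop where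
  subset : A ⊆ B
  isSidon : IsSidon (B : Set ℤ)
  card_eq : #B = #A + 2
  mem_or_abs_le : ∀ a ∈ B, a ∈ A ∨ |a| ≤ 8 * (#A : ℤ) ^ 3

theorem IsSidon.exists_isSidonExtension_of_notMem {A : Finset ℤ} (hA : IsSidon (A : Set ℤ))
    (hne : A.Nonempty) {n : ℤ} (hn : |n| ≤ (#A : ℤ) ^ 2) (hnA : n ∉ A + A) :
    ∃ B, IsSidonExtension A B ∧ n ∈ B + B := by
  obtain ⟨b, hb, hbA, hnbA⟩ := exists_notMem_forbidden_abs_le hn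
  have hbA' := notMem_of_notMem_forbidden hb
  have hnbA' := sub_notMem_of_notMem_forbidden hb
  have hbnb := ne_sub_of_notMem_forbidden hb hne
  refine ⟨insert (n - b) (insert b A), ?_,
    Finset.mem_add.mpr ⟨n - b, by simp, b, by simp, sub_add_cancel n b⟩⟩
  exact
    { subset := by grind
      isSidon := by simpa only [Finset.coe_insert] using hA.insert_sub_insert hne hnA hb
      card_eq := by grind
      mem_or_abs_le := by grind }

theorem IsSidon.exists_isSidonExtension {A : Finset ℤ} (hA : IsSidon (A : Set ℤ))
    (hne : A.Nonempty) {n : ℤ} (hn : |n| ≤ (#A : ℤ) ^ 2) :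
    ∃ B, IsSidonExtension A B ∧ n ∈ B + B := by
  by_cases hnA : n ∈ A + A
  · obtain ⟨m, hmA, hm⟩ := exists_notMem_add_self_abs_le A
    obtain ⟨B, hB, -⟩ := hA.exists_isSidonExtension_of_notMem hne hm hmA
    exact ⟨B, hB, Finset.add_subset_add hB.subset hB.subset hnA⟩
  · exact hA.exists_isSidonExtension_of_notMem hne hn hnA

/-- The invariant satisfied by the `i`-th set of the chain. The subtraction is truncated: for
`i = 0` the bound is `0`, so that `{0}` is the only possible initial set. -/
structure IsSidonStage (i : ℕ) (A : Finset ℤ) : Prop where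
  isSidon : IsSidon (A : Set ℤ)
  card_eq : #A = 2 * i + 1
  abs_le : ∀ a ∈ A, |a| ≤ 8 * ((2 * i - 1 : ℕ) : ℤ) ^ 3

theorem isSidonStage_zero : IsSidonStage 0 {0} := by
  refine ⟨?_, by simp, by simp⟩
  simpa using isSidon_singleton (0 : ℤ)

theorem IsSidonStage.exists_succ {i : ℕ} {A : Finset ℤ} (h : IsSidonStage i A) {n : ℤ}
    (hn : |n| ≤ i) : ∃ B, IsSidonStage (i + 1) B ∧ A ⊆ B ∧ n ∈ B + B := by
  have hcard := h.card_eq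
  have hn' : |n| ≤ (#A : ℤ) ^ 2 := by rw [hcard]; push_cast; nlinarith
  obtain ⟨B, hB, hnB⟩ := h.isSidon.exists_isSidonExtension (Finset.card_pos.mp (by omega)) hn'
  refine ⟨B, ⟨hB.isSidon, by rw [hB.card_eq]; omega, fun a ha ↦ ?_⟩, hB.subset, hnB⟩
  rw [show 2 * (i + 1) - 1 = #A by omega]
  rcases hB.mem_or_abs_le a ha with ha | ha
  · exact (h.abs_le a ha).trans (by gcongr; omega)
  · exact ha

theorem abs_le_intEquivNat (n : ℤ) : |n| ≤ Equiv.intEquivNat n := by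
  cases n with
  | ofNat m =>
    change |(m : ℤ)| ≤ (2 * m : ℕ)
    grind
  | negSucc m =>
    change |Int.negSucc m| ≤ (2 * m + 1 : ℕ)
    grind

theorem exists_monotone_isSidonStage :
    ∃ A : ℕ → Finset ℤ, Monotone A ∧ (∀ i, IsSidonStage i (A i)) ∧ ∀ n, ∃ i, n ∈ A i + A i := by
  let enum := Equiv.intEquivNat.symm
  have henum (i : ℕ) : |enum i| ≤ i := by simpa [enum] using abs_le_intEquivNat (enum i)
  choose! next hnext hsub hmem using fun i A (h : IsSidonStage i A) ↦ h.exists_succ (henum i)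
  let A : ℕ → Finset ℤ := Nat.rec {0} next
  have hA (i : ℕ) : IsSidonStage i (A i) := by
    induction i with
    | zero => exact isSidonStage_zero
    | succ i ih => exact hnext i _ ih
  refine ⟨A, monotone_nat_of_le_succ fun i ↦ hsub i _ (hA i), hA, fun n ↦
    ⟨Equiv.intEquivNat n + 1, ?_⟩⟩
  simpa [enum] using hmem _ _ (hA (Equiv.intEquivNat n))

theorem IsSidonStage.lt_ncard {i m : ℕ} {S : Finset ℤ} (hS : IsSidonStage i S) (hi : 2 * i - 1 ≤ m)
    (hm : m ≤ 2 * i) {A : Set ℤ} (hSA : (S : Set ℤ) ⊆ A) :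
    m < {a : ℤ | a ∈ A ∧ |(a : ℝ)| ≤ 8 * (m : ℝ) ^ 3}.ncard := by
  have hsub : (S : Set ℤ) ⊆ {a : ℤ | a ∈ A ∧ |(a : ℝ)| ≤ 8 * (m : ℝ) ^ 3} := fun a ha ↦ by
    have : |a| ≤ 8 * (m : ℤ) ^ 3 := (hS.abs_le a ha).trans (by gcongr)
    exact ⟨hSA ha, mod_cast this⟩
  calc
    m < #S := by rw [hS.card_eq]; omega
    _ = (S : Set ℤ).ncard := (Set.ncard_coe_finset S).symm
    _ ≤ _ := Set.ncard_le_ncard hsub (finite_mem_abs_le A _)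

theorem stmt7_general :
    ∃ A : Set ℤ,
      (∀ n : ℤ, rep2 A n = 1) ∧
      ∀ x : ℝ, 0 ≤ x →
        (x / 8) ^ ((1 : ℝ) / 3) ≤ ({a : ℤ | a ∈ A ∧ |(a : ℝ)| ≤ x}.ncard : ℝ) := by
  obtain ⟨A, hmono, hA, hcover⟩ := exists_monotone_isSidonStage
  have hsub := Set.subset_iUnion fun i ↦ (A i : Set ℤ)
  refine ⟨⋃ i, (A i : Set ℤ), fun n ↦ ?_, fun x hx ↦ ?_⟩
  · have hdir : Directed (· ⊆ ·) fun i ↦ (A i : Set ℤ) :=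
      Monotone.directed_le fun _ _ hij ↦ Finset.coe_subset.mpr (hmono hij)
    obtain ⟨i, hi⟩ := hcover n
    refine rep2_eq_one_of_isSidon (isSidon_iUnion_of_directed hdir fun i ↦ (hA i).isSidon) ?_
    exact Set.add_subset_add (hsub i) (hsub i) (mod_cast hi)
  · have hcount := rpow_inv_le_ncard_abs_le (d := 3) (by norm_num : (0 : ℝ) < 8) three_ne_zero
      (fun m ↦ (hA ((m + 1) / 2)).lt_ncard (by omega) (by omega) (hsub _)) hx
    simpa only [one_div, Nat.cast_ofNat] using hcount

theorem stmt7 :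
    ∃ A : Set ℤ,
      (∀ n : ℤ, rep2 A n = 1) ∧
      ∀ x : ℝ, 64 ≤ x →
        (x / 8) ^ ((1 : ℝ) / 3) ≤ ({a : ℤ | a ∈ A ∧ |(a : ℝ)| ≤ x}.ncard : ℝ) := by
  obtain ⟨A, hrep, hcount⟩ := stmt7_general
  exact ⟨A, hrep, fun x hx ↦ hcount x (by linarith)⟩
end

section
/- Let f : ℤ → ℕ ∪ {∞} be a function with Δ = card(f⁻¹(0)) finite, and let u be an integer with f(u) ≥ 1 and |u| ≤ (1 + Δ)/2. Then there exists an integer a with |a| ≤ 1 + Δ such that the set A = {a + u, −a} has exactly two elements, r_{A,2}(n) ≤ f(n) for all integers n, and r_{A,2}(u) ≥ 1. -/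
/-!
The only sums of two elements of `A = {a + u, -a}` are `2 (a + u)`, `u` and `-2 a`, and each is
represented once. As `f u ≥ 1`, it suffices that `a + u ≠ -a` and that neither `2 (a + u)` nor
`-2 a` is a zero of `f`. Each zero of `f` excludes at most two values of `a`, and `a + u = -a`
excludes at most one more, so at most `2 Δ + 1` of the `2 Δ + 3` integers with `|a| ≤ 1 + Δ` are
excluded.
-/

section RepresentationFunction

open scoped Pointwise

variable {A : Set ℤ}

theorem one_le_rep2_iff {n : ℤ} : 1 ≤ rep2 A n ↔ n ∈ A + A := by
  rw [rep2, Set.one_le_encard_iff_nonempty, Set.mem_add]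
  constructor
  · rintro ⟨⟨x, y⟩, hx, hy, -, hxy⟩
    exact ⟨x, hx, y, hy, hxy⟩
  · rintro ⟨x, hx, y, hy, hxy⟩
    rcases le_total x y with hle | hle
    · exact ⟨(x, y), hx, hy, hle, hxy⟩
    · exact ⟨(y, x), hy, hx, hle, (add_comm y x).trans hxy⟩

theorem rep2_le_of_forall_mem_add_self {f : ℤ → ℕ∞} (hA : ∀ n, rep2 A n ≤ 1)
    (hf : ∀ n ∈ A + A, f n ≠ 0) (n : ℤ) : rep2 A n ≤ f n := by
  by_cases hn : n ∈ A + A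
  · exact (hA n).trans (Order.one_le_iff_ne_zero.2 (hf n hn))
  · have hzero : rep2 A n = 0 := by
      rwa [← one_le_rep2_iff, Order.one_le_iff_ne_zero, not_not] at hn
    exact hzero.trans_le zero_le

theorem rep2_pair_le_one (x y n : ℤ) : rep2 {x, y} n ≤ 1 := by
  rw [rep2, Set.encard_le_one_iff]
  rintro ⟨p, q⟩ ⟨r, s⟩ ⟨hp, hq, hpq, hn⟩ ⟨hr, hs, hrs, hn'⟩
  simp only [Set.mem_insert_iff, Set.mem_singleton_iff] at hp hq hpq hn hr hs hrs hn'
  rw [Prod.mk.injEq]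
  omega

theorem rep2_pair_le {f : ℤ → ℕ∞} {x y : ℤ} (hxx : f (x + x) ≠ 0) (hxy : f (x + y) ≠ 0)
    (hyy : f (y + y) ≠ 0) (n : ℤ) : rep2 {x, y} n ≤ f n := by
  refine rep2_le_of_forall_mem_add_self (rep2_pair_le_one x y) ?_ n
  rintro _ ⟨p, rfl | rfl, q, rfl | rfl, rfl⟩
  · exact hxx
  · exact hxy
  · exact (add_comm q p ▸ hxy : f (p + q) ≠ 0)
  · exact hyy

end RepresentationFunction

theorem encard_preimage_le_of_injective {α β : Type*} {g : α → β} (hg : g.Injective)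
    (s : Set β) : (g ⁻¹' s).encard ≤ s.encard :=
  Set.encard_le_encard_of_injOn (Set.mapsTo_preimage g s) hg.injOn

theorem exists_abs_le_notMem_of_encard_le {s : Set ℤ} {N : ℕ} (hs : s.encard ≤ 2 * N) :
    ∃ a : ℤ, |a| ≤ N ∧ a ∉ s := by
  have hIcc : (Set.Icc (-N : ℤ) N).encard = (2 * N + 1 : ℕ) := by
    rw [← Finset.coe_Icc, Set.encard_coe_eq_coe_finsetCard, Int.card_Icc]
    congr 1
    omega
  have hnotSub : ¬ Set.Icc (-N : ℤ) N ⊆ s := fun hsub => by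
    have hcard := (Set.encard_le_encard hsub).trans hs
    rw [hIcc] at hcard
    norm_cast at hcard
    omega
  obtain ⟨a, ha, has⟩ := Set.not_subset.1 hnotSub
  exact ⟨a, abs_le.2 ha, has⟩

theorem exists_abs_le_add_self_notMem {Z : Set ℤ} {N : ℕ} (hZ : Z.encard ≤ N) (u : ℤ) :
    ∃ a : ℤ, |a| ≤ 1 + (N : ℤ) ∧ a + u ≠ -a ∧ (a + u) + (a + u) ∉ Z ∧ -a + -a ∉ Z := by
  let coincide : Set ℤ := {a | a + u = -a}
  let left : Set ℤ := (fun a => (a + u) + (a + u)) ⁻¹' Z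
  let right : Set ℤ := (fun a => -a + -a) ⁻¹' Z
  have hcoincide : coincide.encard ≤ 1 := Set.encard_le_one_iff.2 fun a b ha hb => by
    simp only [coincide, Set.mem_ofPred_eq] at ha hb
    omega
  have hleft : left.encard ≤ N :=
    (encard_preimage_le_of_injective (fun _ _ _ => by omega) Z).trans hZ
  have hright : right.encard ≤ N :=
    (encard_preimage_le_of_injective (fun _ _ _ => by omega) Z).trans hZ
  have hexcluded : (coincide ∪ (left ∪ right)).encard ≤ 2 * (1 + N : ℕ) := by
    calc (coincide ∪ (left ∪ right)).encard ≤ coincide.encard + (left.encard + right.encard) := by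
          grw [Set.encard_union_le, Set.encard_union_le]
      _ ≤ 1 + (N + N) := by gcongr
      _ ≤ 2 * (1 + N : ℕ) := by
          norm_cast
          omega
  obtain ⟨a, ha, hnotMem⟩ := exists_abs_le_notMem_of_encard_le hexcluded
  simp only [Set.mem_union, not_or] at hnotMem
  exact ⟨a, by exact_mod_cast ha, hnotMem⟩

theorem stmt11_general (f : ℤ → ℕ∞) (hf : (f ⁻¹' {0}).Finite) (Δ : ℕ)
    (hΔ : (f ⁻¹' {0}).ncard = Δ) (u : ℤ) (hu1 : 1 ≤ f u) :
    ∃ a : ℤ, |a| ≤ 1 + (Δ : ℤ) ∧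
      ({a + u, -a} : Set ℤ).ncard = 2 ∧
      (∀ n : ℤ, rep2 {a + u, -a} n ≤ f n) ∧
      1 ≤ rep2 {a + u, -a} u := by
  have hcard : (f ⁻¹' {0}).encard ≤ Δ := by rw [← hf.cast_ncard_eq, hΔ]
  obtain ⟨a, ha, hne, hx, hy⟩ := exists_abs_le_add_self_notMem hcard u
  have hsum : (a + u) + -a = u := by ring
  refine ⟨a, ha, Set.ncard_pair hne, rep2_pair_le hx ?_ hy, ?_⟩
  · rw [hsum]
    exact Order.one_le_iff_ne_zero.1 hu1
  · exact one_le_rep2_iff.2 ⟨a + u, .inl rfl, -a, .inr rfl, hsum⟩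

theorem stmt11 (f : ℤ → ℕ∞) (hf : (f ⁻¹' {0}).Finite) (Δ : ℕ)
    (hΔ : (f ⁻¹' {0}).ncard = Δ) (u : ℤ)
    (hu1 : 1 ≤ f u) (hu2 : 2 * |u| ≤ 1 + (Δ : ℤ)) :
    ∃ a : ℤ, |a| ≤ 1 + (Δ : ℤ) ∧
      ({a + u, -a} : Set ℤ).ncard = 2 ∧
      (∀ n : ℤ, rep2 {a + u, -a} n ≤ f n) ∧
      1 ≤ rep2 {a + u, -a} u :=
  stmt11_general f hf Δ hΔ u hu1
end

section
/- Let f : ℤ → ℕ ∪ {∞} be a function with Δ = card(f⁻¹(0)) finite, and let c = 8 + ⌊(Δ + 1)/2⌋. Let k ≥ 2 be an integer, let A be a finite set of 2(k−1) integers with A ⊆ [−c(k−1)³, c(k−1)³] and r_{A,2}(n) ≤ f(n) for all integers n, and let u be an integer with |u| ≤ k² + Δ/2 and r_{A,2}(u) < f(u). Then there exist at least two integers a such that the set A' = A ∪ {a + u, −a} has exactly 2k elements, A' ⊆ [−ck³, ck³], r_{A',2}(n) ≤ f(n) for all integers n, and r_{A',2}(u) = r_{A,2}(u) + 1. -/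
/-!
Call a value forbidden if it lies in `T = (A + A) ∪ f⁻¹(0)`. Adding `x = a + u` and `y = -a` to `A`
creates the sum `x + y = u`, which gains one representation, and two families of sums: `x + b` with
`b ∈ A ∪ {x}`, and `y + b` with `b ∈ A ∪ {y}`. If no sum of either family is forbidden and the two
families are disjoint, each of these sums had no representation before, has exactly one now, and is
allowed one by `f`. As functions of `a`, the sums of the first family are strictly increasing and
those of the second strictly decreasing, so each undesired coincidence excludes at most one `a`.
With `|A| = 2 (k - 1)` this excludes `O(k³ + k Δ)` values of `a`, with constants small enough to
leave two values in the interval `|a| ≤ c k³ - |u|`.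
-/

open Set
open scoped Pointwise

section FreePairs

variable {G : Type*}

/-- The new sums created when `x` is added to `A`: the elements `x + b` with `b ∈ A ∪ {x}`. -/
def newSums [Add G] (A : Set G) (x : G) : Set G :=
  (x + ·) '' insert x A

/-- The pair `x`, `y` is free over `A` relative to a set `T` of forbidden values: the new sums
created by `x` and those created by `y` avoid `T` and each other. The sum `x + y` is left out, as
this is the one value whose number of representations is meant to change. -/
structure IsFreePair [Add G] (A T : Set G) (x y : G) : Prop where
  disjoint_left : Disjoint (newSums A x) T
  disjoint_right : Disjoint (newSums A y) T
  disjoint_newSums : Disjoint (newSums A x) (newSums A y)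

theorem newSums_insert [Add G] (A : Set G) (x y : G) :
    newSums (insert y A) x = insert (x + y) (newSums A x) := by
  rw [newSums, insert_comm, image_insert_eq, newSums]

theorem notMem_of_disjoint_newSums [Add G] {A T : Set G} {x : G} (hT : A + A ⊆ T)
    (h : Disjoint (newSums A x) T) : x ∉ A := fun hx ↦
  h.notMem_of_mem_left (mem_image_of_mem _ (mem_insert x A)) (hT (add_mem_add hx hx))

theorem IsFreePair.ne [Add G] {A T : Set G} {x y : G} (h : IsFreePair A T x y) : x ≠ y := by
  rintro rfl
  exact h.disjoint_newSums.notMem_of_mem_left (mem_image_of_mem _ (mem_insert x A))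
    (mem_image_of_mem _ (mem_insert x A))

theorem IsFreePair.left_notMem_insert [Add G] {A T : Set G} {x y : G} (h : IsFreePair A T x y)
    (hT : A + A ⊆ T) : x ∉ insert y A := by
  rintro (hxy | hx)
  · exact h.ne hxy
  · exact notMem_of_disjoint_newSums hT h.disjoint_left hx

theorem IsFreePair.ncard_insert_insert [Add G] {A T : Set G} {x y : G} (h : IsFreePair A T x y)
    (hT : A + A ⊆ T) (hA : A.Finite) : (insert x (insert y A)).ncard = A.ncard + 2 := by
  rw [ncard_insert_of_notMem (h.left_notMem_insert hT) (hA.insert y),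
    ncard_insert_of_notMem (notMem_of_disjoint_newSums hT h.disjoint_right) hA]

end FreePairs

section RepresentationFunction

variable {A : Set ℤ} {f : ℤ → ℕ∞} {x y n : ℤ}

theorem rep2_eq_zero_iff : rep2 A n = 0 ↔ n ∉ A + A := by
  rw [rep2, encard_eq_zero, eq_empty_iff_forall_notMem, mem_add]
  constructor
  · rintro h ⟨a, ha, b, hb, rfl⟩
    rcases le_total a b with hab | hba
    · exact h (a, b) ⟨ha, hb, hab, rfl⟩
    · exact h (b, a) ⟨hb, ha, hba, add_comm b a⟩
  · rintro h ⟨a, b⟩ ⟨ha, hb, -, hab⟩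
    exact h ⟨a, ha, b, hb, hab⟩

theorem rep2_insert_of_notMem_newSums (hn : n ∉ newSums A x) :
    rep2 (insert x A) n = rep2 A n := by
  have mem_of_add_eq {p q : ℤ} (hp : p ∈ insert x A) (hq : q ∈ insert x A) (hpq : p + q = n) :
      p ∈ A := by
    refine hp.resolve_left ?_
    rintro rfl
    exact hn ⟨q, hq, hpq⟩
  unfold rep2
  congr 1
  ext ⟨p, q⟩
  constructor
  · rintro ⟨hp, hq, hle, hsum⟩
    exact ⟨mem_of_add_eq hp hq hsum, mem_of_add_eq hq hp ((add_comm q p).trans hsum), hle, hsum⟩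
  · rintro ⟨hp, hq, h⟩
    exact ⟨mem_insert_of_mem x hp, mem_insert_of_mem x hq, h⟩

theorem rep2_insert_of_mem_newSums (hx : x ∉ A) (hn : n ∈ newSums A x) :
    rep2 (insert x A) n = rep2 A n + 1 := by
  obtain ⟨b, hb, rfl⟩ := hn
  unfold rep2
  rw [← encard_insert_of_notMem (a := (min x b, max x b))]
  · congr 1
    ext ⟨p, q⟩
    simp only [mem_insert_iff, mem_ofPred_eq, Prod.mk.injEq] at hb ⊢
    grind
  · rintro ⟨hmin, hmax, -⟩
    rcases le_total x b with h | h
    · exact hx (by simpa only [min_eq_left h] using hmin)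
    · exact hx (by simpa only [max_eq_left h] using hmax)

theorem rep2_insert_insert_add {T : Set ℤ} (h : IsFreePair A T x y) (hT : A + A ⊆ T) :
    rep2 (insert x (insert y A)) (x + y) = rep2 A (x + y) + 1 := by
  have hx : x ∉ insert y A := h.left_notMem_insert hT
  have hxy : x + y ∉ newSums A y := by
    rintro ⟨b, hb, hsum⟩
    obtain rfl : b = x := by linarith
    exact hx hb
  have hmem : x + y ∈ newSums (insert y A) x := by
    rw [newSums_insert]
    exact mem_insert _ _
  rw [rep2_insert_of_mem_newSums hx hmem, rep2_insert_of_notMem_newSums hxy]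

theorem rep2_add_one_le_of_notMem (hn : n ∉ A + A ∪ f ⁻¹' {0}) : rep2 A n + 1 ≤ f n := by
  rw [mem_union, not_or] at hn
  rw [rep2_eq_zero_iff.mpr hn.1, zero_add]
  exact Order.one_le_iff_ne_zero.mpr hn.2

theorem rep2_insert_insert_le (h : IsFreePair A (A + A ∪ f ⁻¹' {0}) x y)
    (hle : ∀ n, rep2 A n ≤ f n) (hlt : rep2 A (x + y) < f (x + y)) (n : ℤ) :
    rep2 (insert x (insert y A)) n ≤ f n := by
  obtain rfl | hne := eq_or_ne n (x + y)
  · rw [rep2_insert_insert_add h subset_union_left]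
    exact Order.add_one_le_of_lt hlt
  have hmem : n ∈ newSums (insert y A) x ↔ n ∈ newSums A x := by
    rw [newSums_insert, mem_insert_iff, or_iff_right hne]
  by_cases hnx : n ∈ newSums A x
  · rw [rep2_insert_of_mem_newSums (h.left_notMem_insert subset_union_left) (hmem.mpr hnx),
      rep2_insert_of_notMem_newSums (h.disjoint_newSums.notMem_of_mem_left hnx)]
    exact rep2_add_one_le_of_notMem (h.disjoint_left.notMem_of_mem_left hnx)
  rw [rep2_insert_of_notMem_newSums (mt hmem.mp hnx)]
  by_cases hny : n ∈ newSums A y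
  · rw [rep2_insert_of_mem_newSums
      (notMem_of_disjoint_newSums subset_union_left h.disjoint_right) hny]
    exact rep2_add_one_le_of_notMem (h.disjoint_right.notMem_of_mem_left hny)
  · rw [rep2_insert_of_notMem_newSums hny]
    exact hle n

end RepresentationFunction

section Counting

theorem encard_setOf_not_disjoint_image_le {ι κ α β : Type*} {I : Set ι} {J : Set κ}
    {F : α → ι → β} {H : α → κ → β} (h : ∀ i j, {a | F a i = H a j}.Subsingleton) :
    {a | ¬ Disjoint (F a '' I) (H a '' J)}.encard ≤ I.encard * J.encard := by
  have hex (a : {a | ¬ Disjoint (F a '' I) (H a '' J)}) :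
      ∃ p ∈ I ×ˢ J, F a p.1 = H a p.2 := by
    obtain ⟨_, ⟨i, hi, rfl⟩, j, hj, hij⟩ := not_disjoint_iff.mp a.2
    exact ⟨(i, j), ⟨hi, hj⟩, hij.symm⟩
  choose p hp heq using hex
  have hinj : Function.Injective p := fun a b hab ↦
    Subtype.ext (h (p a).1 (p a).2 (heq a) (hab ▸ heq b))
  rw [← encard_prod]
  exact hinj.encard_range.ge.trans (encard_le_encard (range_subset_iff.mpr hp))

theorem encard_add_self_le {M : Type*} [Add M] (A : Set M) :
    (A + A).encard ≤ A.encard ^ 2 := by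
  rw [← add_image_prod, sq, ← encard_prod]
  exact encard_image_le _ _

-- The index `none` stands for the sum `x + x`, so that the index set does not depend on `x`.
theorem newSums_eq_image {G : Type*} [Add G] (A : Set G) (x : G) :
    newSums A x = (fun o : Option G ↦ x + o.getD x) '' insert none (some '' A) := by
  simp only [newSums, image_insert_eq, image_image, Option.getD_none, Option.getD_some]

theorem encard_insert_none_image_some_le {α : Type*} (A : Set α) :
    (insert none (some '' A)).encard ≤ A.encard + 1 :=
  (encard_insert_le _ _).trans (by gcongr; exact encard_image_le _ _)

theorem subsingleton_setOf_eq_of_strictMono_of_antitone {α β : Type*} [LinearOrder α]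
    [Preorder β] {F H : α → β} (hF : StrictMono F) (hH : Antitone H) :
    {a | F a = H a}.Subsingleton := by
  intro a ha b hb
  by_contra hne
  wlog hab : a < b generalizing a b
  · exact this hb ha (Ne.symm hne) ((not_lt.mp hab).lt_of_ne' hne)
  exact lt_irrefl (F a) <| calc
    F a < F b := hF hab
    _ = H b := hb
    _ ≤ H a := hH hab.le
    _ = F a := ha.symm

variable {G : Type*} [AddCommGroup G] [LinearOrder G] [IsOrderedAddMonoid G]

theorem strictMono_add_getD (o : Option G) : StrictMono fun x ↦ x + o.getD x := by
  cases o with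
  | none => exact strictMono_id.add strictMono_id
  | some b => exact strictMono_id.add_const b

theorem encard_setOf_not_disjoint_newSums_le (A T : Set G) {φ : G → G}
    (hφ : Function.Injective φ) :
    {a | ¬ Disjoint (newSums A (φ a)) T}.encard ≤ (A.encard + 1) * T.encard := by
  have key := encard_setOf_not_disjoint_image_le (I := insert none (some '' A)) (J := T)
    (F := fun a o ↦ φ a + o.getD (φ a)) (H := fun _ t ↦ t)
    fun o _ _ ha _ hb ↦ hφ ((strictMono_add_getD o).injective (ha.trans hb.symm))
  simp only [← newSums_eq_image, image_id'] at key
  grw [key, encard_insert_none_image_some_le]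

theorem encard_setOf_not_disjoint_newSums_newSums_le (A : Set G) (u : G) :
    {a | ¬ Disjoint (newSums A (a + u)) (newSums A (-a))}.encard ≤ (A.encard + 1) ^ 2 := by
  have key := encard_setOf_not_disjoint_image_le
    (I := insert none (some '' A)) (J := insert none (some '' A))
    (F := fun a o ↦ (a + u) + o.getD (a + u)) (H := fun a o ↦ -a + o.getD (-a))
    fun i j ↦ subsingleton_setOf_eq_of_strictMono_of_antitone
      ((strictMono_add_getD i).comp (strictMono_id.add_const u))
      ((strictMono_add_getD j).monotone.comp_antitone fun _ _ ↦ neg_le_neg)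
  simp only [← newSums_eq_image] at key
  grw [key, encard_insert_none_image_some_le, sq]

theorem encard_setOf_not_isFreePair_le (A T : Set G) (u : G) :
    {a | ¬ IsFreePair A T (a + u) (-a)}.encard
      ≤ (A.encard + 1) * (2 * T.encard + A.encard + 1) := by
  have hsub : {a | ¬ IsFreePair A T (a + u) (-a)} ⊆
      {a | ¬ Disjoint (newSums A (a + u)) T} ∪ {a | ¬ Disjoint (newSums A (-a)) T} ∪
        {a | ¬ Disjoint (newSums A (a + u)) (newSums A (-a))} := by
    intro a ha
    by_contra hnot
    simp only [mem_union, mem_ofPred_eq, not_or, not_not] at hnot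
    exact ha ⟨hnot.1.1, hnot.1.2, hnot.2⟩
  grw [hsub, encard_union_le, encard_union_le,
    encard_setOf_not_disjoint_newSums_le A T (add_left_injective u),
    encard_setOf_not_disjoint_newSums_le A T neg_injective,
    encard_setOf_not_disjoint_newSums_newSums_le]
  exact le_of_eq (by ring)

theorem one_lt_encard_Icc_sdiff {B : Set ℤ} {R : ℕ} (hB : B.encard < 2 * R) :
    1 < (Icc (-R : ℤ) R \ B).encard := by
  have hIcc : (Icc (-R : ℤ) R).encard = 2 * R + 1 := by
    rw [← Finset.coe_Icc, encard_coe_eq_coe_finsetCard, Int.card_Icc]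
    norm_cast
    omega
  by_contra! hle
  have hcontra : (2 * R + 1 : ℕ∞) ≤ 2 * R := calc
    (2 * R + 1 : ℕ∞) = (Icc (-R : ℤ) R).encard := hIcc.symm
    _ ≤ (Icc (-R : ℤ) R \ B).encard + B.encard := by
      grw [← encard_union_le, sdiff_union_self]
      exact encard_le_encard subset_union_left
    _ ≤ B.encard + 1 := by grw [hle, add_comm]
    _ ≤ 2 * R := Order.add_one_le_of_lt hB
  norm_cast at hcontra
  omega

theorem exists_isFreePair_of_lt {A T : Set ℤ} {u : ℤ} {N : ℕ}
    (h : (A.encard + 1) * (2 * T.encard + A.encard + 1) + 2 * u.natAbs < 2 * N) :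
    ∃ a₁ a₂ : ℤ, a₁ ≠ a₂ ∧
      ∀ a ∈ ({a₁, a₂} : Set ℤ), |a + u| ≤ N ∧ |-a| ≤ N ∧ IsFreePair A T (a + u) (-a) := by
  have huN : u.natAbs ≤ N := by
    have : (2 * u.natAbs : ℕ∞) < 2 * N := lt_of_le_of_lt le_add_self h
    norm_cast at this
    omega
  obtain ⟨R, rfl⟩ := Nat.exists_eq_add_of_le' huN
  have hbad : {a | ¬ IsFreePair A T (a + u) (-a)}.encard < 2 * R := by
    rw [Nat.cast_add, mul_add 2 (R : ℕ∞)] at h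
    exact (encard_setOf_not_isFreePair_le A T u).trans_lt (lt_of_add_lt_add_right h)
  obtain ⟨a₁, a₂, h₁, h₂, hne⟩ := one_lt_encard_iff.mp (one_lt_encard_Icc_sdiff hbad)
  refine ⟨a₁, a₂, hne, fun a ha ↦ ?_⟩
  obtain ⟨haR, hfree⟩ : a ∈ Icc (-R : ℤ) R \ {a | ¬ IsFreePair A T (a + u) (-a)} := by
    rcases ha with rfl | rfl <;> assumption
  have habs : |a| ≤ R := abs_le.mpr haR
  refine ⟨?_, ?_, not_not.mp hfree⟩
  · push_cast
    linarith [abs_add_le a u]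
  · rw [abs_neg]
    omega

end Counting

-- The product is the bound on the number of excluded parameters for `|A| = 2 (k - 1)` and
-- `|T| = |A|² + Δ`.
theorem excluded_add_two_mul_natAbs_lt {Δ c k : ℕ} {u : ℤ} (hc : 16 + Δ ≤ 2 * c) (hk : 2 ≤ k)
    (hu : 2 * |u| ≤ 2 * (k : ℤ) ^ 2 + Δ) :
    (2 * (k - 1) + 1) * (2 * ((2 * (k - 1)) ^ 2 + Δ) + 2 * (k - 1) + 1) + 2 * u.natAbs
      < 2 * (c * k ^ 3) := by
  obtain ⟨i, rfl⟩ := Nat.exists_eq_add_of_le' hk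
  have hu' : 2 * u.natAbs ≤ 2 * (i + 2) ^ 2 + Δ := by
    zify
    exact_mod_cast hu
  have hc' : (16 + Δ) * (i + 2) ^ 3 ≤ 2 * (c * (i + 2) ^ 3) := by
    rw [← mul_assoc]
    gcongr
  have hk_sub : i + 2 - 1 = i + 1 := rfl
  rw [hk_sub]
  nlinarith [Nat.zero_le (Δ * (i ^ 3 + 6 * i ^ 2 + 8 * i + 1)), Nat.zero_le (i ^ 2)]

theorem stmt12 (f : ℤ → ℕ∞) (hf : (f ⁻¹' {0}).Finite) (Δ : ℕ)
    (hΔ : (f ⁻¹' {0}).ncard = Δ) (c : ℕ) (hc : c = 8 + (Δ + 1) / 2)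
    (k : ℕ) (hk : 2 ≤ k) (A : Set ℤ) (hAfin : A.Finite)
    (hAcard : A.ncard = 2 * (k - 1))
    (hAsub : ∀ b ∈ A, |b| ≤ (c : ℤ) * ((k : ℤ) - 1) ^ 3)
    (hAle : ∀ n : ℤ, rep2 A n ≤ f n)
    (u : ℤ) (hu : 2 * |u| ≤ 2 * (k : ℤ) ^ 2 + (Δ : ℤ))
    (hru : rep2 A u < f u) :
    ∃ a₁ a₂ : ℤ, a₁ ≠ a₂ ∧
      ∀ a ∈ ({a₁, a₂} : Set ℤ),
        (insert (a + u) (insert (-a) A)).ncard = 2 * k ∧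
        (∀ b ∈ insert (a + u) (insert (-a) A), |b| ≤ (c : ℤ) * (k : ℤ) ^ 3) ∧
        (∀ n : ℤ, rep2 (insert (a + u) (insert (-a) A)) n ≤ f n) ∧
        rep2 (insert (a + u) (insert (-a) A)) u = rep2 A u + 1 := by
  set T : Set ℤ := A + A ∪ f ⁻¹' {0}
  have hA : A.encard = (2 * (k - 1) : ℕ) := by rw [← hAfin.cast_ncard_eq, hAcard]
  have hT : T.encard ≤ ((2 * (k - 1)) ^ 2 + Δ : ℕ) := by
    grw [encard_union_le, encard_add_self_le, hA, ← hf.cast_ncard_eq, hΔ]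
    norm_cast
  have hcount : (A.encard + 1) * (2 * T.encard + A.encard + 1) + 2 * u.natAbs
      < 2 * (c * k ^ 3 : ℕ) := by
    grw [hT, hA]
    exact_mod_cast excluded_add_two_mul_natAbs_lt (by omega) hk hu
  obtain ⟨a₁, a₂, hne, hgood⟩ := exists_isFreePair_of_lt hcount
  refine ⟨a₁, a₂, hne, fun a ha ↦ ?_⟩
  obtain ⟨hleft, hright, hfree⟩ := hgood a ha
  have hau : a + u + -a = u := by ring
  refine ⟨?_, ?_, rep2_insert_insert_le hfree hAle (hau.symm ▸ hru), ?_⟩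
  · rw [hfree.ncard_insert_insert subset_union_left hAfin, hAcard]
    omega
  · rintro b (rfl | rfl | hb)
    · exact_mod_cast hleft
    · exact_mod_cast hright
    · refine (hAsub b hb).trans ?_
      gcongr <;> omega
  · simpa only [hau] using rep2_insert_insert_add hfree subset_union_left
end

section
/- Let f : ℤ → ℕ ∪ {∞} be a function, let (u_i)_{i≥1} be a sequence of integers such that for every integer n, f(n) equals the number of indices i with u_i = n, and let (i_k)_{k≥1} be a strictly increasing sequence of positive integers. Let (A_k)_{k≥1} be an increasing sequence of finite sets of integers such that for every k: r_{A_k,2}(n) ≤ f(n) for all n ∈ ℤ, and r_{A_k,2}(u_j) ≥ card({i ≤ i_k : u_i = u_j}) for j = 1, …, k. Then the set A = ⋃_{k≥1} A_k satisfies r_{A,2}(n) = f(n) for all integers n. -/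
/-!
Counting commutes with directed unions, since a finite subset of the union already lies in one
member. Representations of `n` by `⋃ k, A k` are the directed union of those by the `A k`, so
`r_{A,2}(n) = sup_k r_{A_k,2}(n) ≤ f n`. In the same way the indices `i` with `u i = n` are
exhausted by their initial segments `i ≤ i_k`, so `f n` is the supremum of the counts which the
`A k` are assumed to dominate.
-/

open Filter Set

variable {α ι κ M : Type*}

theorem directed_Ici_of_monotoneOn [Preorder ι] [IsDirectedOrder ι] [Preorder α] {g : ι → α}
    {k₀ : ι} (hg : MonotoneOn g (Ici k₀)) : Directed (· ≤ ·) fun k : Ici k₀ ↦ g k := by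
  rintro ⟨i, hi⟩ ⟨j, hj⟩
  obtain ⟨k, hik, hjk⟩ := exists_ge_ge i j
  have hk : k ∈ Ici k₀ := le_trans hi hik
  exact ⟨⟨k, hk⟩, hg hi hk hik, hg hj hk hjk⟩

theorem encard_iUnion_of_directed [Nonempty ι] {s : ι → Set α} (hs : Directed (· ⊆ ·) s) :
    (⋃ i, s i).encard = ⨆ i, (s i).encard := by
  refine le_antisymm ?_ (iSup_le fun i ↦ encard_le_encard (subset_iUnion s i))
  refine ENat.forall_natCast_le_iff_le.1 fun m hm ↦ ?_
  obtain ⟨t, ht, htm⟩ := exists_subset_encard_eq hm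
  lift t to Finset α using finite_of_encard_eq_coe htm
  obtain ⟨i, hi⟩ := hs.exists_mem_subset_of_finset_subset_biUnion ht
  exact htm ▸ le_iSup_of_le i (encard_le_encard hi)

theorem encard_eq_iSup_encard_inter_Iic [Preorder κ] [IsDirectedOrder κ] [Nonempty κ] (s : Set κ) :
    s.encard = ⨆ a, (s ∩ Iic a).encard := by
  have hmono : Monotone fun a ↦ s ∩ Iic a :=
    fun _ _ hab ↦ inter_subset_inter_right s (Iic_subset_Iic.2 hab)
  rw [← encard_iUnion_of_directed hmono.directed_le, ← inter_iUnion, iUnion_Iic, inter_univ]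

theorem encard_le_of_eventually_encard_inter_Iic_le [Preorder κ] [IsDirectedOrder κ]
    {l : Filter ι} [l.NeBot] {b : ι → κ} (hb : Tendsto b l atTop) {s : Set κ} {c : ℕ∞}
    (hs : ∀ᶠ k in l, (s ∩ Iic (b k)).encard ≤ c) : s.encard ≤ c := by
  have : Nonempty κ := l.nonempty_of_neBot.map b
  rw [encard_eq_iSup_encard_inter_Iic]
  refine iSup_le fun a ↦ ?_
  obtain ⟨k, hk, hak⟩ := (hs.and (hb.eventually_ge_atTop a)).exists
  exact (encard_le_encard (inter_subset_inter_right s (Iic_subset_Iic.2 hak))).trans hk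

section Representations

variable [Add M] [LE M]

/-- The representations `n = a₁ + a₂` with `a₁, a₂ ∈ A` and `a₁ ≤ a₂`, as pairs `(a₁, a₂)`. The
representation function `r_{A,2}(n)` is the `encard` of this set; over `ℤ` this is `rep2 A n`. -/
def orderedReps (A : Set M) (n : M) : Set (M × M) :=
  {p | p.1 ∈ A ∧ p.2 ∈ A ∧ p.1 ≤ p.2 ∧ p.1 + p.2 = n}

theorem orderedReps_subset_orderedReps {A B : Set M} (h : A ⊆ B) (n : M) :
    orderedReps A n ⊆ orderedReps B n :=
  fun _ hp ↦ ⟨h hp.1, h hp.2.1, hp.2.2⟩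

theorem orderedReps_iUnion_of_directed {A : ι → Set M} (hA : Directed (· ⊆ ·) A) (n : M) :
    orderedReps (⋃ k, A k) n = ⋃ k, orderedReps (A k) n := by
  refine Subset.antisymm ?_
    (iUnion_subset fun k ↦ orderedReps_subset_orderedReps (subset_iUnion A k) n)
  rintro p ⟨h₁, h₂, hp⟩
  obtain ⟨i, hi⟩ := mem_iUnion.1 h₁
  obtain ⟨j, hj⟩ := mem_iUnion.1 h₂
  obtain ⟨k, hik, hjk⟩ := hA i j
  exact mem_iUnion.2 ⟨k, hik hi, hjk hj, hp⟩

theorem encard_orderedReps_iUnion_of_directed [Nonempty ι] {A : ι → Set M}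
    (hA : Directed (· ⊆ ·) A) (n : M) :
    (orderedReps (⋃ k, A k) n).encard = ⨆ k, (orderedReps (A k) n).encard := by
  have hreps : Directed (· ⊆ ·) fun k ↦ orderedReps (A k) n :=
    hA.mono_comp (g := (orderedReps · n)) _ fun _ _ h ↦ orderedReps_subset_orderedReps h n
  rw [orderedReps_iUnion_of_directed hA, encard_iUnion_of_directed hreps]

theorem stmt13_general [Preorder ι] [IsDirectedOrder ι] [Preorder κ] [IsDirectedOrder κ]
    (f : M → ℕ∞) (u : κ → M) (J : Set κ) (hu : ∀ n, f n = {i | i ∈ J ∧ u i = n}.encard)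
    (idx : ι → κ) (hidx : Tendsto idx atTop atTop)
    (A : ι → Set M) (k₀ : ι) (hmono : MonotoneOn A (Ici k₀))
    (hle : ∀ k ≥ k₀, ∀ n, (orderedReps (A k) n).encard ≤ f n)
    (hge : ∀ j ∈ J, ∀ᶠ k in atTop,
      {i | i ∈ J ∧ i ≤ idx k ∧ u i = u j}.encard ≤ (orderedReps (A k) (u j)).encard) (n : M) :
    (orderedReps (⋃ k ≥ k₀, A k) n).encard = f n := by
  have : Nonempty ι := ⟨k₀⟩
  apply le_antisymm
  · have hdir : Directed (· ⊆ ·) fun k : Ici k₀ ↦ A k := directed_Ici_of_monotoneOn hmono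
    rw [show (⋃ k ≥ k₀, A k) = ⋃ k : Ici k₀, A k from biUnion_eq_iUnion (Ici k₀) fun k _ ↦ A k,
      encard_orderedReps_iUnion_of_directed hdir]
    exact iSup_le fun k ↦ hle k k.2 n
  · rw [hu]
    rcases eq_empty_or_nonempty {i | i ∈ J ∧ u i = n} with hempty | ⟨j, hj, rfl⟩
    · simp only [hempty, encard_empty, zero_le]
    · apply encard_le_of_eventually_encard_inter_Iic_le hidx
      filter_upwards [hge j hj, eventually_ge_atTop k₀] with k hk hk₀
      calc ({i | i ∈ J ∧ u i = u j} ∩ Iic (idx k)).encard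
          ≤ {i | i ∈ J ∧ i ≤ idx k ∧ u i = u j}.encard :=
            encard_le_encard fun i hi ↦ ⟨hi.1.1, hi.2, hi.1.2⟩
        _ ≤ (orderedReps (A k) (u j)).encard := hk
        _ ≤ (orderedReps (⋃ k ≥ k₀, A k) (u j)).encard :=
            encard_le_encard (orderedReps_subset_orderedReps (subset_biUnion_of_mem hk₀) _)

end Representations

theorem stmt13 (f : ℤ → ℕ∞) (u : ℕ → ℤ)
    (hu : ∀ n : ℤ, f n = {i : ℕ | 1 ≤ i ∧ u i = n}.encard)
    (idx : ℕ → ℕ) (hidxpos : ∀ k : ℕ, 1 ≤ k → 1 ≤ idx k)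
    (hidxmono : ∀ k : ℕ, 1 ≤ k → idx k < idx (k + 1))
    (A : ℕ → Set ℤ) (hfin : ∀ k : ℕ, 1 ≤ k → (A k).Finite)
    (hmono : ∀ k : ℕ, 1 ≤ k → A k ⊆ A (k + 1))
    (hle : ∀ k : ℕ, 1 ≤ k → ∀ n : ℤ, rep2 (A k) n ≤ f n)
    (hge : ∀ k : ℕ, 1 ≤ k → ∀ j : ℕ, 1 ≤ j → j ≤ k →
      {i : ℕ | 1 ≤ i ∧ i ≤ idx k ∧ u i = u j}.encard ≤ rep2 (A k) (u j)) :
    ∀ n : ℤ, rep2 (⋃ k ≥ 1, A k) n = f n := by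
  have hidx : Tendsto idx atTop atTop := (tendsto_add_atTop_iff_nat 1).1
    (strictMono_nat_of_lt_succ fun k ↦ hidxmono (k + 1) k.succ_pos).tendsto_atTop
  exact stmt13_general f u {i | 1 ≤ i} hu idx hidx A 1 (monotoneOn_nat_Ici_of_le_succ hmono) hle
    fun j hj ↦ eventually_atTop.2 ⟨j, fun k hk ↦ hge k (hj.trans hk) j hj hk⟩
end

section
/- Let f : ℤ → ℕ ∪ {∞} be a function with Δ = card(f⁻¹(0)) finite, let k ≥ 2, let A be a set of 2(k−1) integers, and let u be an integer. Then the number of integers a that fail at least one of the following conditions is at most 16(k−1)³ + 12(k−1)² + (4Δ + 8)(k−1) + 2Δ: (1) (A + {a + u, −a}) ∩ 2A = ∅; (2) (A + {a + u, −a}) ∩ f⁻¹(0) = ∅; (3) (A + a + u) ∩ (A − a) = ∅; (4) {2a + 2u, −2a} ∩ 2A = ∅; (5) {2a + 2u, −2a} ∩ f⁻¹(0) = ∅; (6) {2a + 2u, −2a} ∩ (A + {a + u, −a}) = ∅. -/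
open scoped Pointwise

/-!
Since `(A + S) ∩ T = ∅` exactly when `S ∩ (T - A) = ∅`, each condition says that one, two or four
expressions in `a` avoid a set not depending on `a`. Every such expression has the form `n • a + c`
with `n ≠ 0`, hence is injective in `a`, so it takes values in a set `T` for at most `|T|` elements
`a`. Summing over the expressions, with `|A + A|` and `|A - A|` at most `|A|²`, gives the bound.
-/

section Cardinality

variable {α β γ : Type*}

lemma encard_setOf_or_le {p q : α → Prop} {m n : ℕ∞} (hp : {x | p x}.encard ≤ m)
    (hq : {x | q x}.encard ≤ n) : {x | p x ∨ q x}.encard ≤ m + n :=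
  (Set.encard_union_le _ _).trans (add_le_add hp hq)

lemma encard_image2_le (f : α → β → γ) (S : Set α) (T : Set β) :
    (Set.image2 f S T).encard ≤ S.encard * T.encard := by
  rw [← Set.image_uncurry_prod, ← Set.encard_prod]
  exact Set.encard_image_le _ _

lemma encard_setOf_mem_le {g : α → β} (hg : g.Injective) (T : Set β) :
    {x | g x ∈ T}.encard ≤ T.encard :=
  Set.encard_le_encard_of_injOn (fun _ hx ↦ hx) hg.injOn

lemma pair_inter_eq_empty_iff (b c : β) (T : Set β) :
    ({b, c} : Set β) ∩ T = ∅ ↔ b ∉ T ∧ c ∉ T := by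
  simp [← Set.disjoint_iff_inter_eq_empty]

lemma encard_setOf_pair_inter_ne_empty_le {g h : α → β} (hg : g.Injective) (hh : h.Injective)
    (T : Set β) : {x | ({g x, h x} : Set β) ∩ T ≠ ∅}.encard ≤ 2 * T.encard := by
  simp only [ne_eq, pair_inter_eq_empty_iff, not_and_or, not_not, two_mul]
  exact encard_setOf_or_le (encard_setOf_mem_le hg T) (encard_setOf_mem_le hh T)

end Cardinality

section Sumsets

variable {α G : Type*}

lemma encard_add_le [Add G] (S T : Set G) : (S + T).encard ≤ S.encard * T.encard :=
  encard_image2_le _ S T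

lemma encard_sub_le [Sub G] (S T : Set G) : (S - T).encard ≤ S.encard * T.encard :=
  encard_image2_le _ S T

variable [AddCommGroup G]

lemma add_inter_eq_empty_iff (A S T : Set G) : (A + S) ∩ T = ∅ ↔ S ∩ (T - A) = ∅ := by
  simp only [Set.eq_empty_iff_forall_notMem, Set.mem_inter_iff, not_and]
  constructor
  · rintro h s hs ⟨t, ht, a, ha, rfl⟩
    exact h t ⟨a, ha, t - a, hs, add_sub_cancel a t⟩ ht
  · rintro h _ ⟨a, ha, s, hs, rfl⟩ ht
    exact h s hs ⟨a + s, ht, a, ha, add_sub_cancel_left a s⟩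

lemma add_singleton_inter_add_singleton_eq_empty_iff (A B : Set G) (b c : G) :
    (A + {b}) ∩ (B + {c}) = ∅ ↔ b - c ∉ B - A := by
  rw [add_inter_eq_empty_iff, add_sub_right_comm, Set.add_singleton, Set.image_add_right,
    Set.singleton_inter_eq_empty, Set.mem_preimage, ← sub_eq_add_neg]

lemma pair_inter_add_pair_eq_empty_iff (A : Set G) (b c d e : G) :
    ({b, c} : Set G) ∩ (A + {d, e}) = ∅ ↔
      ({b - d, b - e} : Set G) ∩ A = ∅ ∧ ({c - d, c - e} : Set G) ∩ A = ∅ := by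
  rw [Set.inter_comm, add_comm, add_inter_eq_empty_iff, Set.inter_comm, Set.insert_eq b,
    Set.union_sub, Set.union_inter_distrib_right, Set.union_empty_iff]
  simp only [Set.singleton_sub, Set.image_pair]

lemma encard_setOf_add_pair_inter_ne_empty_le {g h : α → G} (hg : g.Injective)
    (hh : h.Injective) (A T : Set G) :
    {x | (A + ({g x, h x} : Set G)) ∩ T ≠ ∅}.encard ≤ 2 * (T.encard * A.encard) := by
  simp only [ne_eq, add_inter_eq_empty_iff]
  exact (encard_setOf_pair_inter_ne_empty_le hg hh _).trans
    (mul_le_mul_right (encard_sub_le T A) 2)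

lemma encard_setOf_add_singleton_inter_add_singleton_ne_empty_le {g h : α → G}
    (hgh : (fun x ↦ g x - h x).Injective) (A B : Set G) :
    {x | (A + {g x}) ∩ (B + {h x}) ≠ ∅}.encard ≤ B.encard * A.encard := by
  simp only [ne_eq, add_singleton_inter_add_singleton_eq_empty_iff, not_not]
  exact (encard_setOf_mem_le hgh _).trans (encard_sub_le B A)

lemma encard_setOf_pair_inter_add_pair_ne_empty_le {g₁ g₂ h₁ h₂ : α → G}
    (h₁₁ : (fun x ↦ g₁ x - h₁ x).Injective) (h₁₂ : (fun x ↦ g₁ x - h₂ x).Injective)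
    (h₂₁ : (fun x ↦ g₂ x - h₁ x).Injective) (h₂₂ : (fun x ↦ g₂ x - h₂ x).Injective)
    (A : Set G) :
    {x | ({g₁ x, g₂ x} : Set G) ∩ (A + {h₁ x, h₂ x}) ≠ ∅}.encard ≤
      2 * A.encard + 2 * A.encard := by
  simp only [ne_eq, pair_inter_add_pair_eq_empty_iff, not_and_or]
  exact encard_setOf_or_le (encard_setOf_pair_inter_ne_empty_le h₁₁ h₁₂ A)
    (encard_setOf_pair_inter_ne_empty_le h₂₁ h₂₂ A)

end Sumsets

section TorsionFree

variable {G : Type*} [AddCommGroup G] [IsAddTorsionFree G]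

lemma injective_of_eq_zsmul_add {g : G → G} {n : ℤ} (hn : n ≠ 0) (c : G)
    (hg : ∀ a, g a = n • a + c) : g.Injective := by
  obtain rfl : g = fun a ↦ n • a + c := funext hg
  exact (add_left_injective c).comp (zsmul_right_injective hn)

lemma encard_setOf_two_zsmul_pair_inter_ne_empty_le (u : G) (T : Set G) :
    {a : G | ({(2 : ℤ) • a + (2 : ℤ) • u, (-2 : ℤ) • a} : Set G) ∩ T ≠ ∅}.encard ≤
      2 * T.encard :=
  encard_setOf_pair_inter_ne_empty_le
    (injective_of_eq_zsmul_add two_ne_zero ((2 : ℤ) • u) fun _ ↦ rfl)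
    (zsmul_right_injective (by decide)) T

lemma encard_setOf_two_zsmul_pair_inter_add_pair_ne_empty_le (u : G) (A : Set G) :
    {a : G | ({(2 : ℤ) • a + (2 : ℤ) • u, (-2 : ℤ) • a} : Set G) ∩
      (A + {a + u, -a}) ≠ ∅}.encard ≤ 2 * A.encard + 2 * A.encard :=
  encard_setOf_pair_inter_add_pair_ne_empty_le
    (injective_of_eq_zsmul_add (n := 1) one_ne_zero u fun a ↦ by module)
    (injective_of_eq_zsmul_add (n := 3) three_ne_zero ((2 : ℤ) • u) fun a ↦ by module)
    (injective_of_eq_zsmul_add (n := -3) (by decide) (-u) fun a ↦ by module)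
    (injective_of_eq_zsmul_add (n := -1) (by decide) 0 fun a ↦ by module) A

theorem stmt17_general (A Z : Set G) (u : G) :
    {a : G | ¬ ((A + ({a + u, -a} : Set G)) ∩ (A + A) = ∅ ∧
        (A + ({a + u, -a} : Set G)) ∩ Z = ∅ ∧
        (A + ({a + u} : Set G)) ∩ (A + ({-a} : Set G)) = ∅ ∧
        ({(2 : ℤ) • a + (2 : ℤ) • u, (-2 : ℤ) • a} : Set G) ∩ (A + A) = ∅ ∧
        ({(2 : ℤ) • a + (2 : ℤ) • u, (-2 : ℤ) • a} : Set G) ∩ Z = ∅ ∧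
        ({(2 : ℤ) • a + (2 : ℤ) • u, (-2 : ℤ) • a} : Set G) ∩
          (A + ({a + u, -a} : Set G)) = ∅)}.encard
      ≤ 2 * A.encard ^ 3 + 3 * A.encard ^ 2 + (2 * Z.encard + 4) * A.encard + 2 * Z.encard := by
  have translate : (fun a : G ↦ a + u).Injective := add_left_injective u
  have translate_sub_neg : (fun a : G ↦ a + u - -a).Injective :=
    injective_of_eq_zsmul_add two_ne_zero u fun a ↦ by module
  calc
    _ ≤ 2 * ((A + A).encard * A.encard) + (2 * (Z.encard * A.encard) +
          (A.encard * A.encard + (2 * (A + A).encard + (2 * Z.encard +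
            (2 * A.encard + 2 * A.encard))))) := by
      simp only [not_and_or]
      exact
        encard_setOf_or_le
          (encard_setOf_add_pair_inter_ne_empty_le translate neg_injective A (A + A)) <|
        encard_setOf_or_le
          (encard_setOf_add_pair_inter_ne_empty_le translate neg_injective A Z) <|
        encard_setOf_or_le
          (encard_setOf_add_singleton_inter_add_singleton_ne_empty_le translate_sub_neg A A) <|
        encard_setOf_or_le (encard_setOf_two_zsmul_pair_inter_ne_empty_le u (A + A)) <|
        encard_setOf_or_le (encard_setOf_two_zsmul_pair_inter_ne_empty_le u Z)
          (encard_setOf_two_zsmul_pair_inter_add_pair_ne_empty_le u A)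
    _ ≤ 2 * (A.encard * A.encard * A.encard) + (2 * (Z.encard * A.encard) +
          (A.encard * A.encard + (2 * (A.encard * A.encard) + (2 * Z.encard +
            (2 * A.encard + 2 * A.encard))))) := by
      gcongr <;> exact encard_add_le A A
    _ = _ := by ring

end TorsionFree

theorem stmt17 (f : ℤ → ℕ∞) (hf : (f ⁻¹' {0}).Finite) (Δ : ℕ)
    (hΔ : (f ⁻¹' {0}).ncard = Δ) (k : ℕ) (hk : 2 ≤ k)
    (A : Set ℤ) (hAfin : A.Finite) (hAcard : A.ncard = 2 * (k - 1)) (u : ℤ) :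
    {a : ℤ | ¬ ((A + ({a + u, -a} : Set ℤ)) ∩ (A + A) = ∅ ∧
        (A + ({a + u, -a} : Set ℤ)) ∩ (f ⁻¹' {0}) = ∅ ∧
        (A + ({a + u} : Set ℤ)) ∩ (A + ({-a} : Set ℤ)) = ∅ ∧
        ({2 * a + 2 * u, -2 * a} : Set ℤ) ∩ (A + A) = ∅ ∧
        ({2 * a + 2 * u, -2 * a} : Set ℤ) ∩ (f ⁻¹' {0}) = ∅ ∧
        ({2 * a + 2 * u, -2 * a} : Set ℤ) ∩ (A + ({a + u, -a} : Set ℤ)) = ∅)}.encard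
      ≤ ((16 * (k - 1) ^ 3 + 12 * (k - 1) ^ 2 + (4 * Δ + 8) * (k - 1) + 2 * Δ : ℕ) : ℕ∞) := by
  refine (stmt17_general A (f ⁻¹' {0}) u).trans_eq ?_
  rw [← hAfin.cast_ncard_eq, ← hf.cast_ncard_eq, hAcard, hΔ]
  push_cast
  ring
end
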